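/- Let n ≥ 6 and let M be a multiset of n positive integers, each at least 2, with exactly three entries equal to 2, and suppose M is outerplane-unigraphic. Then for every outerplane graph G on n vertices with degree multiset M, the chord graph of the set S of chords of G contains exactly one cycle, and that cycle is a triangle; moreover, deleting from the chord graph its three chord-free vertices (the three isolated vertices) yields a connected graph. (This is the paper's Lemma 5, stated for p = n+1 ≥ 7.) -/

import Mathlib

/-- The vertices strictly between `a` and `b`, traversing the cycle `ZMod n`
from `a` towards `b` in the direction of increasing residues. -/
def Between (n : ℕ) (a b v : ZMod n) : Prop :=
  0 < (v - a).val ∧ (v - a).val < (b - a).val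

/-- `e` is an edge of the standard `n`-cycle on `ZMod n`. -/
def IsCycleEdge (n : ℕ) (e : Sym2 (ZMod n)) : Prop :=
  ∃ i : ZMod n, e = s(i, i + 1)

/-- A chord: an unordered pair of distinct vertices of `ZMod n` that is not an
edge of the standard `n`-cycle. -/
def IsChord (n : ℕ) (e : Sym2 (ZMod n)) : Prop :=
  ¬ e.IsDiag ∧ ¬ IsCycleEdge n e

/-- Two chords cross if exactly one endpoint of the second lies strictly between
the endpoints of the first (traversing in the direction of increasing residues). -/
def Cross (n : ℕ) (e f : Sym2 (ZMod n)) : Prop :=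
  ∀ a b c d : ZMod n, e = s(a, b) → f = s(c, d) →
    Xor' (Between n a b c) (Between n a b d)

/-- `S` is a set of pairwise non-crossing chords of the standard `n`-cycle. -/
def NonCrossingChords (n : ℕ) (S : Set (Sym2 (ZMod n))) : Prop :=
  (∀ e ∈ S, IsChord n e) ∧ ∀ e ∈ S, ∀ f ∈ S, e ≠ f → ¬ Cross n e f

/-- The chord graph of a set `S` of chords: the simple graph on `ZMod n`
whose edge set is `S`. -/
def chordGraph (n : ℕ) (S : Set (Sym2 (ZMod n))) : SimpleGraph (ZMod n) :=
  SimpleGraph.fromEdgeSet S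

/-- A vertex is chord-free for `S` if it is incident to no chord of `S`. -/
def ChordFree (n : ℕ) (S : Set (Sym2 (ZMod n))) (v : ZMod n) : Prop :=
  ∀ e ∈ S, v ∉ e

/-- An outerplane graph on `n` vertices: a simple graph on `ZMod n` whose edge
set is the (disjoint) union of the standard `n`-cycle and a set of pairwise
non-crossing chords. -/
def IsOuterplane (n : ℕ) (G : SimpleGraph (ZMod n)) : Prop :=
  ∃ S : Set (Sym2 (ZMod n)), NonCrossingChords n S ∧
    G.edgeSet = {e | IsCycleEdge n e} ∪ S

/-- The multiset of vertex degrees of a graph on a finite vertex type. -/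
noncomputable def degMultiset {V : Type*} [Fintype V] (G : SimpleGraph V) : Multiset ℕ := by
  classical exact Finset.univ.val.map fun v => G.degree v

/-- The multiset of vertex degrees of a graph on `ZMod n` (junk value for `n = 0`). -/
noncomputable def degreeMultiset (n : ℕ) (G : SimpleGraph (ZMod n)) : Multiset ℕ :=
  if h : n = 0 then 0
  else by haveI : NeZero n := ⟨h⟩; exact degMultiset G

/-- `M` is outerplane-unigraphic on `n` vertices: there is an outerplane graph on
`n` vertices with degree multiset `M`, and any two such are isomorphic. -/
def OuterplaneUnigraphic (n : ℕ) (M : Multiset ℕ) : Prop :=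
  (∃ G : SimpleGraph (ZMod n), IsOuterplane n G ∧ degreeMultiset n G = M) ∧
  ∀ G G' : SimpleGraph (ZMod n), IsOuterplane n G → IsOuterplane n G' →
    degreeMultiset n G = M → degreeMultiset n G' = M → Nonempty (G ≃g G')

/-- A caterpillar: a connected acyclic graph (tree) in which all vertices of
degree at least two lie on a common path. -/
def IsCaterpillar {V : Type*} (G : SimpleGraph V) : Prop :=
  G.Connected ∧ G.IsAcyclic ∧
    ∃ (u w : V) (p : G.Walk u w), p.IsPath ∧
      ∀ v : V, (∃ a b : V, a ≠ b ∧ G.Adj v a ∧ G.Adj v b) → v ∈ p.support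


/-- Noncrossing chord structure in linear coordinates. -/
def NC (n : ℕ) (H : SimpleGraph (ZMod n)) : Prop :=
  (∀ a b, H.Adj a b → a.val ≠ b.val ∧ a.val + 1 ≠ b.val ∧ ¬ (a.val = 0 ∧ b.val + 1 = n)) ∧
  ∀ a b c d, H.Adj a b → H.Adj c d → ¬ (a.val < c.val ∧ c.val < b.val ∧ b.val < d.val)

lemma val_sub_cases (n : ℕ) [NeZero n] (v a : ZMod n) :
    (v - a).val + a.val = v.val ∨ (v - a).val + a.val = v.val + n := by
  have h := ZMod.val_add (v - a) a
  rw [sub_add_cancel] at h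
  have h1 := ZMod.val_lt (v - a)
  have h2 := ZMod.val_lt a
  rcases lt_or_ge ((v - a).val + a.val) n with h3 | h3
  · rw [Nat.mod_eq_of_lt h3] at h; omega
  · rw [Nat.mod_eq_sub_mod h3, Nat.mod_eq_of_lt (by omega)] at h; omega

lemma between_iff (n : ℕ) [NeZero n] (a b v : ZMod n) :
    Between n a b v ↔ (a.val < v.val ∧ v.val < b.val) ∨
      (b.val < a.val ∧ (a.val < v.val ∨ v.val < b.val)) := by
  unfold Between
  have h1 := val_sub_cases n v a
  have h2 := val_sub_cases n b a
  have h3 := ZMod.val_lt (v - a)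
  have h4 := ZMod.val_lt (b - a)
  have h5 := ZMod.val_lt a
  have h6 := ZMod.val_lt b
  have h7 := ZMod.val_lt v
  omega

lemma exists_val (n : ℕ) [NeZero n] {k : ℕ} (h : k < n) : ∃ x : ZMod n, x.val = k :=
  ⟨(k : ZMod n), ZMod.val_natCast_of_lt h⟩

lemma val_succ (n : ℕ) [NeZero n] (hn : 2 ≤ n) (i : ZMod n) :
    (i + 1).val = i.val + 1 ∨ (i.val + 1 = n ∧ (i + 1).val = 0) := by
  have h := ZMod.val_add i 1
  have : Fact (1 < n) := ⟨hn⟩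
  rw [ZMod.val_one] at h
  have := ZMod.val_lt i
  rcases Nat.lt_or_ge (i.val + 1) n with h3 | h3
  · rw [Nat.mod_eq_of_lt h3] at h; omega
  · have : i.val + 1 = n := by omega
    rw [this, Nat.mod_self] at h; omega

lemma isCycleEdge_iff (n : ℕ) [NeZero n] (hn : 2 ≤ n) (a b : ZMod n) :
    IsCycleEdge n s(a, b) ↔ (b.val = a.val + 1 ∨ a.val = b.val + 1 ∨
      (a.val = 0 ∧ b.val + 1 = n) ∨ (b.val = 0 ∧ a.val + 1 = n)) := by
  constructor
  · rintro ⟨i, hi⟩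
    have := val_succ n hn i
    rcases Sym2.eq_iff.1 hi with ⟨rfl, rfl⟩ | ⟨rfl, rfl⟩ <;> omega
  · intro h
    have ha := val_succ n hn a
    have hb := val_succ n hn b
    have h6 := ZMod.val_lt a
    have h7 := ZMod.val_lt b
    have h8 := ZMod.val_lt (a + 1)
    have h9 := ZMod.val_lt (b + 1)
    have hh : (a + 1).val = b.val ∨ (b + 1).val = a.val := by omega
    rcases hh with hh | hh
    · exact ⟨a, by rw [ZMod.val_injective n hh]⟩
    · exact ⟨b, by rw [ZMod.val_injective n hh, Sym2.eq_swap]⟩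

lemma chordGraph_adj {n : ℕ} {S : Set (Sym2 (ZMod n))} (hS : NonCrossingChords n S)
    (a b : ZMod n) : (chordGraph n S).Adj a b ↔ s(a, b) ∈ S := by
  unfold chordGraph
  rw [SimpleGraph.fromEdgeSet_adj]
  refine ⟨fun h => h.1, fun h => ⟨h, fun hab => (hS.1 _ h).1 ?_⟩⟩
  simpa using hab

lemma NC_of (n : ℕ) [NeZero n] (hn : 2 ≤ n) {S : Set (Sym2 (ZMod n))}
    (hS : NonCrossingChords n S) : NC n (chordGraph n S) := by
  constructor
  · intro a b hab
    have hne : a.val ≠ b.val := fun h => hab.ne (ZMod.val_injective n h)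
    rw [chordGraph_adj hS] at hab
    have := (hS.1 _ hab).2
    rw [isCycleEdge_iff n hn] at this
    omega
  · rintro a b c d hab hcd ⟨h1, h2, h3⟩
    rw [chordGraph_adj hS] at hab hcd
    refine hS.2 _ hab _ hcd ?_ ?_
    · intro h
      rcases Sym2.eq_iff.1 h with ⟨rfl, rfl⟩ | ⟨rfl, rfl⟩ <;> omega
    · intro a' b' c' d' h h'
      rcases Sym2.eq_iff.1 h with ⟨rfl, rfl⟩ | ⟨rfl, rfl⟩ <;>
      rcases Sym2.eq_iff.1 h' with ⟨rfl, rfl⟩ | ⟨rfl, rfl⟩ <;>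
      (unfold Xor' Xor; simp only [between_iff]; omega)

lemma ear_in (n : ℕ) [NeZero n] (H : SimpleGraph (ZMod n)) (hH : NC n H) (k : ℕ) :
    ∀ a b : ZMod n, b.val - a.val ≤ k → H.Adj a b → a.val < b.val →
      ∃ x : ZMod n, (∀ y, ¬ H.Adj x y) ∧ a.val < x.val ∧ x.val < b.val := by
  induction k with
  | zero => intro a b h _ h'; omega
  | succ k ih =>
    intro a b h hab hlt
    have h1 := hH.1 a b hab
    obtain ⟨x, hx⟩ := exists_val n (k := a.val + 1) (by have := ZMod.val_lt b; omega)
    by_cases hf : ∀ y, ¬ H.Adj x y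
    · exact ⟨x, hf, by omega, by omega⟩
    · push Not at hf
      obtain ⟨y, hy⟩ := hf
      have h2 := hH.1 y x hy.symm
      have h5 := hH.2 a b x y hab hy
      have h6 := hH.2 y x a b hy.symm hab
      have h7 : x.val ≠ y.val := fun h => hy.ne (ZMod.val_injective n h)
      obtain ⟨z, hz⟩ := ih x y (by omega) hy (by omega)
      exact ⟨z, hz.1, by omega, by omega⟩

lemma ear_out (n : ℕ) [NeZero n] (H : SimpleGraph (ZMod n)) (hH : NC n H) (k : ℕ) :
    ∀ a b : ZMod n, n - (b.val - a.val) ≤ k → H.Adj a b → a.val < b.val →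
      ∃ x : ZMod n, (∀ y, ¬ H.Adj x y) ∧ (x.val < a.val ∨ b.val < x.val) := by
  induction k with
  | zero => intro a b h _ h'; have := ZMod.val_lt b; omega
  | succ k ih =>
    intro a b h hab hlt
    have h1 := hH.1 a b hab
    have hbn := ZMod.val_lt b
    by_cases ha : a.val = 0
    · obtain ⟨x, hx⟩ := exists_val n (k := b.val + 1) (by omega)
      by_cases hf : ∀ y, ¬ H.Adj x y
      · exact ⟨x, hf, by omega⟩
      · push Not at hf
        obtain ⟨y, hy⟩ := hf
        have h2 := hH.1 y x hy.symm
        have h6 := hH.2 a b y x hab hy.symm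
        have h7 : x.val ≠ y.val := fun h => hy.ne (ZMod.val_injective n h)
        rcases Nat.lt_or_ge x.val y.val with h8 | h8
        · obtain ⟨z, hz⟩ := ear_in n H hH _ x y le_rfl hy h8
          exact ⟨z, hz.1, by omega⟩
        · have hxn := ZMod.val_lt x
          obtain ⟨z, hz⟩ := ih y x (by omega) hy.symm (by omega)
          exact ⟨z, hz.1, by omega⟩
    · obtain ⟨x, hx⟩ := exists_val n (k := a.val - 1) (by omega)
      by_cases hf : ∀ y, ¬ H.Adj x y
      · exact ⟨x, hf, by omega⟩
      · push Not at hf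
        obtain ⟨y, hy⟩ := hf
        have h2 := hH.1 x y hy
        have h6 := hH.2 x y a b hy hab
        have h7 : x.val ≠ y.val := fun h => hy.ne (ZMod.val_injective n h)
        have hyn := ZMod.val_lt y
        rcases Nat.lt_or_ge x.val y.val with h8 | h8
        · obtain ⟨z, hz⟩ := ih x y (by omega) hy (by omega)
          exact ⟨z, hz.1, by omega⟩
        · obtain ⟨z, hz⟩ := ear_in n H hH _ y x le_rfl hy.symm (by omega)
          exact ⟨z, hz.1, by omega⟩

/-- strictly inside -/
def Ins {n : ℕ} (a b x : ZMod n) : Prop :=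
  (a.val < x.val ∧ x.val < b.val) ∨ (b.val < x.val ∧ x.val < a.val)

lemma ear_side (n : ℕ) [NeZero n] (H : SimpleGraph (ZMod n)) (hH : NC n H) (a b : ZMod n)
    (hab : H.Adj a b) (P : Prop) :
    ∃ x : ZMod n, (∀ y, ¬ H.Adj x y) ∧ (Ins a b x ↔ P) := by
  have hne : a.val ≠ b.val := fun h => hab.ne (ZMod.val_injective n h)
  unfold Ins
  by_cases hP : P
  · rcases Nat.lt_or_ge a.val b.val with h | h
    · obtain ⟨x, hx⟩ := ear_in n H hH _ a b le_rfl hab h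
      exact ⟨x, hx.1, by simp [hP]; omega⟩
    · obtain ⟨x, hx⟩ := ear_in n H hH _ b a le_rfl hab.symm (by omega)
      exact ⟨x, hx.1, by simp [hP]; omega⟩
  · rcases Nat.lt_or_ge a.val b.val with h | h
    · obtain ⟨x, hx⟩ := ear_out n H hH _ a b le_rfl hab h
      exact ⟨x, hx.1, by simp [hP]; omega⟩
    · obtain ⟨x, hx⟩ := ear_out n H hH _ b a le_rfl hab.symm (by omega)
      exact ⟨x, hx.1, by simp [hP]; omega⟩

lemma same_side (n : ℕ) [NeZero n] (H : SimpleGraph (ZMod n)) (hH : NC n H) {a b c d : ZMod n}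
    (hab : H.Adj a b) (hcd : H.Adj c d) (h1 : c ≠ a) (h2 : c ≠ b) (h3 : d ≠ a) (h4 : d ≠ b) :
    Ins a b c ↔ Ins a b d := by
  have i := ZMod.val_injective n
  have g1 : c.val ≠ a.val := fun h => h1 (i h)
  have g2 : c.val ≠ b.val := fun h => h2 (i h)
  have g3 : d.val ≠ a.val := fun h => h3 (i h)
  have g4 : d.val ≠ b.val := fun h => h4 (i h)
  have k1 := hH.2 a b c d hab hcd
  have k2 := hH.2 a b d c hab hcd.symm
  have k3 := hH.2 b a c d hab.symm hcd
  have k4 := hH.2 b a d c hab.symm hcd.symm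
  have k5 := hH.2 c d a b hcd hab
  have k6 := hH.2 c d b a hcd hab.symm
  have k7 := hH.2 d c a b hcd.symm hab
  have k8 := hH.2 d c b a hcd.symm hab.symm
  unfold Ins
  omega

lemma path_side (n : ℕ) [NeZero n] (H : SimpleGraph (ZMod n)) (hH : NC n H) {a b : ZMod n}
    (hab : H.Adj a b) {c : ZMod n} (q : H.Walk c a) (hq : q.IsPath) (hb : b ∉ q.support) (hc : c ≠ a) :
    ∀ v ∈ q.support, v ≠ a → (Ins a b v ↔ Ins a b c) := by
  induction q with
  | nil => exact absurd rfl hc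
  | @cons u v w h p ih =>
    rw [SimpleGraph.Walk.cons_isPath_iff] at hq
    rw [SimpleGraph.Walk.support_cons, List.mem_cons, not_or] at hb
    intro x hx hxa
    rw [SimpleGraph.Walk.support_cons, List.mem_cons] at hx
    rcases hx with rfl | hx
    · rfl
    by_cases hva : v = w
    · subst hva
      have hn := SimpleGraph.Walk.isPath_iff_nil.1 hq.1
      rw [SimpleGraph.Walk.nil_iff_support_eq.1 hn] at hx
      simp at hx
      exact absurd hx hxa
    · rw [ih hab hq.1 hb.2 hva x hx hxa]
      refine (same_side n H hH hab h hc (Ne.symm hb.1) hva ?_).symm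
      rintro rfl
      exact hb.2 p.start_mem_support

lemma cycle_side (n : ℕ) [NeZero n] (H : SimpleGraph (ZMod n)) (hH : NC n H) {w : ZMod n}
    (d : H.Walk w w) (hd : d.IsCycle) (a b : ZMod n) (he : s(a, b) ∈ d.edges) :
    ∃ P : Prop, ∀ v ∈ d.support, v ≠ a → v ≠ b → (Ins a b v ↔ P) := by
  classical
  have hab : H.Adj a b := d.adj_of_mem_edges he
  have ha : a ∈ d.support := d.fst_mem_support_of_mem_edges he
  have hd' := hd.rotate ha
  have he' : s(a, b) ∈ (d.rotate a ha).edges := (d.rotate_edges a ha).perm.mem_iff.2 he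
  have hs : ∀ v ∈ d.support, v ∈ (d.rotate a ha).support := fun v hv =>
    (d.mem_support_rotate_iff a ha).2 hv
  suffices ∃ P : Prop, ∀ v ∈ (d.rotate a ha).support, v ≠ a → v ≠ b → (Ins a b v ↔ P) by
    obtain ⟨P, hP⟩ := this
    exact ⟨P, fun v hv => hP v (hs v hv)⟩
  generalize d.rotate a ha = d' at hd' he'
  clear hs he hd d ha
  cases d' with
  | nil => simp at he'
  | @cons _ v _ h p =>
  rw [SimpleGraph.Walk.cons_isCycle_iff] at hd'
  by_cases hvb : v = b
  · subst hvb
    cases p with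
    | nil => exact absurd rfl h.ne
    | @cons _ c _ h2 q =>
    rw [SimpleGraph.Walk.cons_isPath_iff] at hd'
    have hca : c ≠ a := by
      rintro rfl
      apply hd'.2
      simp [Sym2.eq_swap]
    refine ⟨_, fun x hx hxa hxb => path_side n H hH hab q hd'.1.1 hd'.1.2 hca x ?_ hxa⟩
    simp at hx
    tauto
  · have hep : s(a, b) ∈ p.reverse.edges := by
      rw [SimpleGraph.Walk.edges_cons, List.mem_cons] at he'
      rcases he' with he' | he'
      · rcases Sym2.eq_iff.1 he' with h1 | h1
        · exact absurd h1.2.symm hvb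
        · exact absurd h1.2.symm hab.ne
      · simpa using he'
    have hpp := hd'.1.reverse
    have hps : ∀ x, x ∈ p.support → x ∈ p.reverse.support := by simp
    generalize p.reverse = p' at hep hpp hps
    cases p' with
    | nil => exact absurd rfl h.ne
    | @cons _ c _ h2 q =>
    rw [SimpleGraph.Walk.cons_isPath_iff] at hpp
    have hcb : c = b := by
      rw [SimpleGraph.Walk.edges_cons, List.mem_cons] at hep
      rcases hep with h1 | h1
      · rcases Sym2.eq_iff.1 h1 with h1 | h1
        · exact h1.2.symm
        · exact absurd h1.2.symm hab.ne
      · exact absurd (q.fst_mem_support_of_mem_edges h1) hpp.2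
    subst hcb
    have h3 : ∀ y, Ins c a y ↔ Ins a c y := fun y => by unfold Ins; tauto
    refine ⟨_, fun x hx hxa hxb => (h3 x).symm.trans (path_side n H hH hab.symm q.reverse 
      hpp.1.reverse (by simpa using hpp.2) hvb x ?_ hxb)⟩
    rw [SimpleGraph.Walk.support_cons, List.mem_cons] at hx
    have := hps x (hx.resolve_left hxa)
    rw [SimpleGraph.Walk.support_cons, List.mem_cons] at this
    simpa using this.resolve_left hxa

lemma edge_free (n : ℕ) [NeZero n] (H : SimpleGraph (ZMod n)) (hH : NC n H) {w : ZMod n}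
    (d : H.Walk w w) (hd : d.IsCycle) (e : Sym2 (ZMod n)) (he : e ∈ d.edges) :
    ∃ x : ZMod n, (∀ y, ¬ H.Adj x y) ∧ ∀ a b, e = s(a, b) →
      ∀ v ∈ d.support, v ≠ a → v ≠ b → (Ins a b x ↔ ¬ Ins a b v) := by
  induction e using Sym2.ind with
  | _ a b =>
  have hab : H.Adj a b := d.adj_of_mem_edges he
  obtain ⟨P, hP⟩ := cycle_side n H hH d hd a b he
  obtain ⟨x, hx, hx'⟩ := ear_side n H hH a b hab (¬ P)
  refine ⟨x, hx, fun a' b' h v hv h1 h2 => ?_⟩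
  rcases Sym2.eq_iff.1 h with ⟨rfl, rfl⟩ | ⟨rfl, rfl⟩
  · rw [hx', hP v hv h1 h2]
  · have h3 : ∀ y, Ins b a y ↔ Ins a b y := fun y => by unfold Ins; tauto
    rw [h3, h3, hx', hP v hv h2 h1]

lemma cycle_len (n : ℕ) [NeZero n] (H : SimpleGraph (ZMod n)) (hH : NC n H)
    (F : Finset (ZMod n)) (hF : ∀ x, (∀ y, ¬ H.Adj x y) → x ∈ F) (hF3 : F.card = 3) {w : ZMod n}
    (d : H.Walk w w) (hd : d.IsCycle) : d.length = 3 := by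
  classical
  have h3 := hd.three_le_length
  choose! f hf1 hf2 using edge_free n H hH d hd
  have hinj : Set.InjOn f (d.edges.toFinset : Set (Sym2 (ZMod n))) := by
    intro e he e' he' hee
    simp only [List.coe_toFinset, Set.mem_ofPred_eq] at he he'
    by_contra hne
    induction e using Sym2.ind with
    | _ a b =>
    induction e' using Sym2.ind with
    | _ c e =>
    have hab : H.Adj a b := d.adj_of_mem_edges he
    have hcd : H.Adj c e := d.adj_of_mem_edges he'
    have q1 := hf2 _ he a b rfl c (d.fst_mem_support_of_mem_edges he')
    have q2 := hf2 _ he a b rfl e (d.snd_mem_support_of_mem_edges he')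
    have q3 := hf2 _ he' c e rfl a (d.fst_mem_support_of_mem_edges he)
    have q4 := hf2 _ he' c e rfl b (d.snd_mem_support_of_mem_edges he)
    rw [← hee] at q3 q4
    have ff := hf1 _ he
    generalize f s(a, b) = x at q1 q2 q3 q4 ff
    have i : ∀ {u v : ZMod n}, u ≠ v ↔ u.val ≠ v.val := 
      fun {u v} => (ZMod.val_injective n).ne_iff.symm
    have k : ¬ (a = c ∧ b = e) ∧ ¬ (a = e ∧ b = c) := by
      constructor <;> rintro ⟨rfl, rfl⟩ <;> simp [Sym2.eq_swap] at hne
    have m1 := hab.ne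
    have m2 := hcd.ne
    have m3 : x ≠ a := fun h => ff b (h ▸ hab)
    have m4 : x ≠ b := fun h => ff a (h ▸ hab.symm)
    have m5 : x ≠ c := fun h => ff e (h ▸ hcd)
    have m6 : x ≠ e := fun h => ff c (h ▸ hcd.symm)
    have k1 := hH.2 a b c e hab hcd
    simp only [Ins, i] at *
    simp only [← (ZMod.val_injective n).eq_iff] at k
    omega
  have hc := Finset.card_le_card_of_injOn f (s := d.edges.toFinset) (t := F)
    (fun e he => hF _ (hf1 e (by simpa using he))) hinj
  rw [List.toFinset_card_of_nodup hd.edges_nodup, SimpleGraph.Walk.length_edges] at hc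
  omega

lemma tri_decomp {V : Type*} (H : SimpleGraph V) {w : V}
    (d : H.Walk w w) (hd : d.length = 3) : ∃ x y z : V, H.Adj x y ∧ H.Adj y z ∧ H.Adj z x ∧
      ∀ v, v ∈ d.support ↔ v = x ∨ v = y ∨ v = z := by
  match d, hd with
  | .cons (v := y) h1 (.cons (v := z) h2 (.cons h3 .nil)), _ =>
    refine ⟨w, y, z, h1, h2, h3, fun v => ?_⟩
    simp
    tauto

lemma tri_form (n : ℕ) [NeZero n] (H : SimpleGraph (ZMod n)) (hH : NC n H) {x y z : ℕ}
    (hF : ∀ u : ZMod n, (∀ v, ¬ H.Adj u v) → u.val = x ∨ u.val = y ∨ u.val = z)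
    (hxy : x < y) (hyz : y < z)
    {a b c : ZMod n} (h1 : H.Adj a b) (h2 : H.Adj b c) (h3 : H.Adj c a)
    (o1 : a.val < b.val) (o2 : b.val < c.val) :
    (a.val < x ∧ x < b.val ∧ b.val < y ∧ y < c.val ∧ c.val < z) ∨
    (x < a.val ∧ a.val < y ∧ y < b.val ∧ b.val < z ∧ z < c.val) := by
  obtain ⟨p, hp, hp'⟩ := ear_in n H hH _ a b le_rfl h1 o1
  obtain ⟨q, hq, hq'⟩ := ear_in n H hH _ b c le_rfl h2 o2
  obtain ⟨r, hr, hr'⟩ := ear_out n H hH _ a c le_rfl h3.symm (o1.trans o2)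
  have kp := hF p hp
  have kq := hF q hq
  have kr := hF r hr
  omega

lemma tri_unique_sorted (n : ℕ) [NeZero n] (H : SimpleGraph (ZMod n)) (hH : NC n H) {x y z : ℕ}
    (hF : ∀ u : ZMod n, (∀ v, ¬ H.Adj u v) → u.val = x ∨ u.val = y ∨ u.val = z)
    (hxy : x < y) (hyz : y < z)
    {a b c a' b' c' : ZMod n} (h1 : H.Adj a b) (h2 : H.Adj b c) (h3 : H.Adj c a)
    (g1 : H.Adj a' b') (g2 : H.Adj b' c') (g3 : H.Adj c' a')
    (o1 : a.val < b.val) (o2 : b.val < c.val) (p1 : a'.val < b'.val) (p2 : b'.val < c'.val) :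
    a = a' ∧ b = b' ∧ c = c' := by
  have t1 := tri_form n H hH hF hxy hyz h1 h2 h3 o1 o2
  have t2 := tri_form n H hH hF hxy hyz g1 g2 g3 p1 p2
  have i2 : ∀ {u v : ZMod n}, u.val = v.val → u = v := fun h => ZMod.val_injective n h
  have c9 := hH.2 a c a' c' h3.symm g3.symm
  have d9 := hH.2 a' c' a c g3.symm h3.symm
  have c3 := hH.2 a b a' c' h1 g3.symm
  have d3 := hH.2 a' c' a b g3.symm h1
  have d3' := hH.2 a' b' a c g1 h3.symm
  have c4 := hH.2 a b b' c' h1 g2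
  have d4 := hH.2 a' b' b c g1 h2
  have c8 := hH.2 a c b' c' h3.symm g2
  have d8 := hH.2 b' c' a c g2 h3.symm
  have d8' := hH.2 a' c' b c g3.symm h2
  refine ⟨i2 ?_, i2 ?_, i2 ?_⟩
  · clear c4 d4 c8 d8 d8'
    omega
  · clear c3 d3 d3' c8 d8 d8'
    omega
  · clear c3 d3 d3' c4 d4
    omega

lemma tri_sort (n : ℕ) [NeZero n] (H : SimpleGraph (ZMod n))
    {a b c : ZMod n} (h1 : H.Adj a b) (h2 : H.Adj b c) (h3 : H.Adj c a) :
    ∃ a' b' c', H.Adj a' b' ∧ H.Adj b' c' ∧ H.Adj c' a' ∧ a'.val < b'.val ∧ b'.val < c'.val ∧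
      ∀ v, (v = a ∨ v = b ∨ v = c) ↔ (v = a' ∨ v = b' ∨ v = c') := by
  have n1 : a.val ≠ b.val := fun h => h1.ne (ZMod.val_injective n h)
  have n2 : b.val ≠ c.val := fun h => h2.ne (ZMod.val_injective n h)
  have n3 : c.val ≠ a.val := fun h => h3.ne (ZMod.val_injective n h)
  rcases lt_or_gt_of_ne n1 with h | h <;> rcases lt_or_gt_of_ne n2 with h' | h' <;>
    rcases lt_or_gt_of_ne n3 with h'' | h''
  · omega
  · exact ⟨a, b, c, h1, h2, h3, h, h', fun v => by tauto⟩
  · exact ⟨c, a, b, h3, h1, h2, h'', h, fun v => by tauto⟩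
  · exact ⟨a, c, b, h3.symm, h2.symm, h1.symm, h'', h', fun v => by tauto⟩
  · exact ⟨b, c, a, h2, h3, h1, h', h'', fun v => by tauto⟩
  · exact ⟨b, a, c, h1.symm, h3.symm, h2.symm, h, h'', fun v => by tauto⟩
  · exact ⟨c, b, a, h2.symm, h1.symm, h3.symm, h', h, fun v => by tauto⟩
  · omega

lemma tri_unique (n : ℕ) [NeZero n] (H : SimpleGraph (ZMod n)) (hH : NC n H)
    (F : Finset (ZMod n)) (hF : ∀ x, (∀ y, ¬ H.Adj x y) → x ∈ F) (hF3 : F.card = 3)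
    {a b c a' b' c' : ZMod n} (h1 : H.Adj a b) (h2 : H.Adj b c) (h3 : H.Adj c a)
    (g1 : H.Adj a' b') (g2 : H.Adj b' c') (g3 : H.Adj c' a') :
    ∀ v, (v = a ∨ v = b ∨ v = c) ↔ (v = a' ∨ v = b' ∨ v = c') := by
  have hxyz : ∃ x y z : ℕ, x < y ∧ y < z ∧ ∀ u ∈ F, u.val = x ∨ u.val = y ∨ u.val = z := by
    classical
    obtain ⟨x, y, z, e1, e2, e3, rfl⟩ := Finset.card_eq_three.1 hF3
    have n1 : x.val ≠ y.val := fun h => e1 (ZMod.val_injective n h)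
    have n2 : x.val ≠ z.val := fun h => e2 (ZMod.val_injective n h)
    have n3 : y.val ≠ z.val := fun h => e3 (ZMod.val_injective n h)
    simp only [Finset.mem_insert, Finset.mem_singleton, forall_eq_or_imp, forall_eq]
    rcases lt_or_gt_of_ne n1 with h | h <;> rcases lt_or_gt_of_ne n2 with h' | h' <;>
      rcases lt_or_gt_of_ne n3 with h'' | h''
    · exact ⟨_, _, _, h, h'', by tauto⟩
    · exact ⟨_, _, _, h', h'', by tauto⟩
    · omega
    · exact ⟨_, _, _, h', h, by tauto⟩
    · exact ⟨_, _, _, h, h', by tauto⟩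
    · omega
    · exact ⟨_, _, _, h'', h', by tauto⟩
    · exact ⟨_, _, _, h'', h, by tauto⟩
  obtain ⟨x, y, z, hxy, hyz, hu⟩ := hxyz
  obtain ⟨a1, b1, c1, q1, q2, q3, q4, q5, q6⟩ := tri_sort n H h1 h2 h3
  obtain ⟨a2, b2, c2, r1, r2, r3, r4, r5, r6⟩ := tri_sort n H g1 g2 g3
  obtain ⟨rfl, rfl, rfl⟩ := tri_unique_sorted n H hH (fun u h => hu u (hF u h)) hxy hyz
    q1 q2 q3 r1 r2 r3 q4 q5 r4 r5
  intro v
  rw [q6, r6]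

lemma forest_card {V : Type*} [Fintype V] [Nonempty V] (F : SimpleGraph V) (hF : F.IsAcyclic) :
    F.edgeSet.ncard + 1 ≤ Fintype.card V ∧
      (Fintype.card V ≤ F.edgeSet.ncard + 1 → F.Connected) := by
  classical
  obtain ⟨T, hFT, hT, hTt⟩ := (SimpleGraph.connected_top (V := V)).exists_isTree_le_of_le_of_isAcyclic
    (H := F) le_top hF
  have h1 := hTt.card_edgeFinset
  have h2 : T.edgeSet.ncard = T.edgeFinset.card := by
    rw [← SimpleGraph.coe_edgeFinset, Set.ncard_coe_finset]
  have hsub : F.edgeSet ⊆ T.edgeSet := SimpleGraph.edgeSet_mono ‹_›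
  have h3 := Set.ncard_le_ncard hsub (Set.toFinite _)
  refine ⟨by omega, fun h => ?_⟩
  have := Set.eq_of_subset_of_ncard_le hsub (by omega) (Set.toFinite _)
  rw [SimpleGraph.edgeSet_inj] at this
  subst this
  exact hTt.connected


lemma part_two (n : ℕ) [NeZero n] (hn : 6 ≤ n) (H : SimpleGraph (ZMod n)) (hH : NC n H)
    (F : Finset (ZMod n)) (hF : ∀ x, x ∈ F ↔ ∀ y, ¬ H.Adj x y) (hF3 : F.card = 3)
    (hm : n ≤ H.edgeSet.ncard + 3) (W : Set (ZMod n)) (hW : ∀ x, x ∈ W ↔ x ∉ F) :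
    (∃ (v : ZMod n) (c : H.Walk v v), c.IsCycle ∧ c.length = 3 ∧
        ∀ (w : ZMod n) (d : H.Walk w w), d.IsCycle →
          ∀ x : ZMod n, x ∈ d.support ↔ x ∈ c.support) ∧ (H.induce W).Connected := by
  classical
  have hF' := fun x => (hF x).2
  have hlen := @cycle_len n _ H hH F hF' hF3
  have hWc : Fintype.card W + 3 = n := by
    have h1 := Finset.card_compl_add_card F
    rw [ZMod.card, hF3] at h1
    have h2 : Fintype.card W = Fᶜ.card := by
      apply Fintype.card_of_subtype
      intro x; rw [hW]; simp
    omega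
  have hWne : Nonempty W := Fintype.card_pos_iff.1 (by omega)
  have hsupp : H.support ⊆ W := by
    intro x hx
    rw [SimpleGraph.mem_support] at hx
    rw [hW, hF]
    push Not
    exact hx
  have hind : (H.induce W).edgeSet.ncard = H.edgeSet.ncard := by
    have := SimpleGraph.card_edgeFinset_induce_of_support_subset (G := H) hsupp
    rw [← SimpleGraph.coe_edgeFinset, Set.ncard_coe_finset, ← SimpleGraph.coe_edgeFinset H,
      Set.ncard_coe_finset]
    convert this
  have hnac : ¬ (H.induce W).IsAcyclic := fun h => by
    have := (forest_card _ h).1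
    omega
  unfold SimpleGraph.IsAcyclic at hnac
  push Not at hnac
  obtain ⟨v, c, hc⟩ := hnac
  have hcm : (c.map (SimpleGraph.Embedding.induce W).toHom).IsCycle :=
    hc.map (SimpleGraph.Embedding.induce (G := H) W).injective
  have hcl := hlen _ hcm
  have huni : ∀ (w : ZMod n) (d : H.Walk w w), d.IsCycle → ∀ x : ZMod n, x ∈ d.support ↔
      x ∈ (c.map (SimpleGraph.Embedding.induce W).toHom).support := by
    intro w d hd x
    obtain ⟨a1, b1, c1, q1, q2, q3, q4⟩ := tri_decomp H _ hcl
    obtain ⟨a2, b2, c2, r1, r2, r3, r4⟩ := tri_decomp H _ (hlen _ hd)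
    rw [q4, r4]
    exact tri_unique n H hH F hF' hF3 r1 r2 r3 q1 q2 q3 x
  refine ⟨⟨_, _, hcm, hcl, huni⟩, ?_⟩
  obtain ⟨a, b, z, q1, q2, q3, -⟩ := tri_decomp _ c ((SimpleGraph.Walk.length_map _ _).symm.trans hcl)
  have hdel : ((H.induce W).deleteEdges {s(a, b)}).IsAcyclic := by
    intro u d hd
    have hle : (H.induce W).deleteEdges {s(a, b)} ≤ H.induce W := SimpleGraph.deleteEdges_le _
    have hd1 := hd.mapLe hle
    have hd2 : ((d.mapLe hle).map (SimpleGraph.Embedding.induce W).toHom).IsCycle :=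
      hd1.map (SimpleGraph.Embedding.induce (G := H) W).injective
    have hl := hlen _ hd2
    obtain ⟨x, y, w, r1, r2, r3, -⟩ := tri_decomp _ d ((SimpleGraph.Walk.length_map _ _).symm.trans ((SimpleGraph.Walk.length_map _ _).symm.trans hl))
    have r1' : H.Adj x y := hle r1
    have r2' : H.Adj y w := hle r2
    have r3' : H.Adj w x := hle r3
    have hu := tri_unique n H hH F hF' hF3 (a := (a : ZMod n)) (b := b) (c := z) q1 q2 q3 r1' r2' r3'
    have ha := (hu a).1 (by simp)
    have hb := (hu b).1 (by simp)
    simp only [Subtype.coe_inj] at ha hb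
    have hab := q1.ne
    rw [SimpleGraph.deleteEdges_adj] at r1 r2 r3
    have hs : s(b, a) = s(a, b) := Sym2.eq_swap
    rcases ha with rfl | rfl | rfl <;> rcases hb with rfl | rfl | rfl <;> simp_all
  have hdc := (forest_card _ hdel).2 (by
    rw [SimpleGraph.edgeSet_deleteEdges, Set.ncard_sdiff_singleton_of_mem (by simpa using q1)]
    omega)
  exact hdc.mono (SimpleGraph.deleteEdges_le _)

/-- Codes of zigzag forests with current last degrees. -/
inductive Good : Multiset ℕ → ℕ → ℕ → Prop
  | base : Good 0 1 1
  | swap {C : Multiset ℕ} {x y : ℕ} : Good C x y → Good C y x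
  | ext {C : Multiset ℕ} {x y : ℕ} : Good C x y → Good (x ::ₘ C) 1 (y + 1)
  | new {C : Multiset ℕ} {x y : ℕ} : Good C x y → Good (x ::ₘ y ::ₘ C) 1 1

lemma good_iter {C : Multiset ℕ} {y : ℕ} (h : Good C 1 y) (a : ℕ) :
    Good (Multiset.replicate a 1 + y ::ₘ C) 1 (a + 2) := by
  induction a with
  | zero => simpa using h.swap.ext
  | succ a ih =>
    have := ih.ext
    rw [Multiset.replicate_succ, Multiset.cons_add]
    exact this

lemma good_bigs (L : Multiset ℕ) : ∃ C y, Good C 1 y ∧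
    1 ::ₘ y ::ₘ C = L.map (· + 2) + Multiset.replicate (2 + L.sum) 1 := by
  induction L using Multiset.induction with
  | empty => exact ⟨0, 1, Good.base, by simp⟩
  | cons a L ih =>
    obtain ⟨C, y, h, he⟩ := ih
    refine ⟨_, _, good_iter h a, ?_⟩
    have : 2 + (a ::ₘ L).sum = a + (2 + L.sum) := by simp; ring
    rw [this, Multiset.replicate_add, Multiset.map_cons]
    calc 1 ::ₘ (a + 2) ::ₘ (Multiset.replicate a 1 + y ::ₘ C)
        = (a + 2) ::ₘ (Multiset.replicate a 1 + 1 ::ₘ y ::ₘ C) := by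
          rw [Multiset.cons_swap, Multiset.add_cons, Multiset.add_cons, Multiset.add_cons]
      _ = _ := by rw [he, Multiset.cons_add]; congr 1; abel

lemma good_all (L : Multiset ℕ) (e : ℕ) : ∃ C x y, Good C x y ∧
    x ::ₘ y ::ₘ C = L.map (· + 2) + Multiset.replicate (2 + L.sum + 2 * e) 1 := by
  induction e with
  | zero =>
    obtain ⟨C, y, h, he⟩ := good_bigs L
    exact ⟨C, 1, y, h, by simpa using he⟩
  | succ e ih =>
    obtain ⟨C, x, y, h, he⟩ := ih
    refine ⟨_, _, _, h.new, ?_⟩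
    have : 2 + L.sum + 2 * (e + 1) = 2 + (2 + L.sum + 2 * e) := by ring
    rw [he, this, Multiset.replicate_add 2]
    have : Multiset.replicate 2 1 = 1 ::ₘ 1 ::ₘ (0 : Multiset ℕ) := rfl
    rw [this]
    simp [Multiset.add_cons]

lemma good_of (C : Multiset ℕ) (h1 : ∀ c ∈ C, 1 ≤ c) (m : ℕ) (hs : C.sum = 2 * m)
    (hm : m + 1 ≤ C.card) : ∃ C0 x y, Good C0 x y ∧ x ::ₘ y ::ₘ C0 = C := by
  classical
  have hC : C = ((C.filter (fun c => ¬ c = 1)).map (· - 2)).map (· + 2)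
      + Multiset.replicate (C.count 1) 1 := by
    rw [Multiset.map_map]
    conv_lhs => rw [← Multiset.filter_add_not (fun c => c = 1) C, add_comm]
    congr 1
    · conv_lhs => rw [← Multiset.map_id (C.filter (fun c => ¬ c = 1))]
      apply Multiset.map_congr rfl
      intro c hc
      rw [Multiset.mem_filter] at hc
      have := h1 c hc.1
      simp only [id, Function.comp]
      omega
    · exact Multiset.filter_eq' C 1
  set L := (C.filter (fun c => ¬ c = 1)).map (· - 2) with hL
  have hsum : C.sum = L.sum + 2 * L.card + C.count 1 := by
    conv_lhs => rw [hC]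
    rw [Multiset.sum_add, Multiset.sum_replicate, Multiset.sum_map_add]
    simp
    ring
  have hcard : C.card = L.card + C.count 1 := by
    conv_lhs => rw [hC]
    simp
  obtain ⟨C0, x, y, h, he⟩ := good_all L ((C.count 1 - 2 - L.sum) / 2)
  refine ⟨C0, x, y, h, ?_⟩
  rw [he]
  conv_rhs => rw [hC]
  congr 2
  omega

/-- top degrees -/
def dT (E : Finset (ℕ × ℕ)) (k : ℕ) : ℕ := (E.filter (fun p => p.1 = k)).card
/-- bottom degrees -/
def dB (E : Finset (ℕ × ℕ)) (k : ℕ) : ℕ := (E.filter (fun p => p.2 = k)).card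

lemma dT_insert (E : Finset (ℕ × ℕ)) (a b k : ℕ) (h : (a, b) ∉ E) :
    dT (insert (a, b) E) k = dT E k + if a = k then 1 else 0 := by
  unfold dT
  rw [Finset.filter_insert]
  split_ifs with h1
  · rw [Finset.card_insert_of_notMem]
    simp [h]
  · simp

lemma dB_insert (E : Finset (ℕ × ℕ)) (a b k : ℕ) (h : (a, b) ∉ E) :
    dB (insert (a, b) E) k = dB E k + if b = k then 1 else 0 := by
  unfold dB
  rw [Finset.filter_insert]
  split_ifs with h1
  · rw [Finset.card_insert_of_notMem]
    simp [h]
  · simp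

/-- bounded chain -/
def Ch (E : Finset (ℕ × ℕ)) (P Q : ℕ) : Prop :=
  (P, Q) ∈ E ∧ (1, 1) ∈ E ∧ (∀ e ∈ E, 1 ≤ e.1 ∧ e.1 ≤ P ∧ 1 ≤ e.2 ∧ e.2 ≤ Q) ∧
  ∀ e ∈ E, ∀ f ∈ E, (e.1 ≤ f.1 ∧ e.2 ≤ f.2) ∨ (f.1 ≤ e.1 ∧ f.2 ≤ e.2)

lemma dT_zero {E : Finset (ℕ × ℕ)} {P Q : ℕ} (h : Ch E P Q) {k : ℕ} (hk : k = 0 ∨ P < k) :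
    dT E k = 0 := by
  unfold dT
  rw [Finset.card_eq_zero, Finset.filter_eq_empty_iff]
  intro e he h1
  have := h.2.2.1 e he
  omega

lemma dB_zero {E : Finset (ℕ × ℕ)} {P Q : ℕ} (h : Ch E P Q) {k : ℕ} (hk : k = 0 ∨ Q < k) :
    dB E k = 0 := by
  unfold dB
  rw [Finset.card_eq_zero, Finset.filter_eq_empty_iff]
  intro e he h1
  have := h.2.2.1 e he
  omega

lemma dT_pos {E : Finset (ℕ × ℕ)} {a b : ℕ} (h : (a, b) ∈ E) : 0 < dT E a :=
  Finset.card_pos.2 ⟨(a, b), by simp [h]⟩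

lemma dB_pos {E : Finset (ℕ × ℕ)} {a b : ℕ} (h : (a, b) ∈ E) : 0 < dB E b :=
  Finset.card_pos.2 ⟨(a, b), by simp [h]⟩

lemma Ch.insert {E : Finset (ℕ × ℕ)} {P Q P' Q' : ℕ} (h : Ch E P Q) (h1 : P < P') (h2 : Q ≤ Q') :
    (P', Q') ∉ E ∧ Ch (insert (P', Q') E) P' Q' := by
  obtain ⟨a1, a2, a3, a4⟩ := h
  refine ⟨fun h => by have := a3 _ h; simp at this; omega, by simp, by simp [a2], ?_, ?_⟩
  · intro e he
    rw [Finset.mem_insert] at he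
    have q := a3 _ a1
    simp only at q
    rcases he with rfl | he
    · simp only; omega
    · have := a3 e he; omega
  · intro e he f hf
    rw [Finset.mem_insert] at he hf
    rcases he with rfl | he <;> rcases hf with rfl | hf
    · simp
    · have := a3 f hf; simp only; omega
    · have := a3 e he; simp only; omega
    · exact a4 e he f hf

/-- realisable -/
def Re (C : Multiset ℕ) (x y : ℕ) : Prop :=
  ∃ p q E, Ch E (p + 1) (q + 1) ∧ dT E (p + 1) = x ∧ dB E (q + 1) = y ∧
    (Multiset.range p).map (fun i => dT E (i + 1)) + (Multiset.range q).map (fun i => dB E (i + 1)) = C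

lemma Re.swap {C : Multiset ℕ} {x y : ℕ} (h : Re C x y) : Re C y x := by
  obtain ⟨p, q, E, h1, h2, h3, h4⟩ := h
  have e1 : ∀ k, dT (E.image Prod.swap) k = dB E k := by
    intro k
    unfold dT dB
    rw [Finset.filter_image, Finset.card_image_of_injective _ Prod.swap_injective]
    rfl
  have e2 : ∀ k, dB (E.image Prod.swap) k = dT E k := by
    intro k
    unfold dT dB
    rw [Finset.filter_image, Finset.card_image_of_injective _ Prod.swap_injective]
    rfl
  refine ⟨q, p, E.image Prod.swap, ?_, ?_, ?_, ?_⟩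
  · obtain ⟨a1, a2, a3, a4⟩ := h1
    refine ⟨by simpa using a1, by simpa using a2, ?_, ?_⟩
    · intro e he
      rw [Finset.mem_image] at he
      obtain ⟨f, hf, rfl⟩ := he
      have := a3 f hf
      simp only [Prod.fst_swap, Prod.snd_swap]
      omega
    · intro e he e' he'
      rw [Finset.mem_image] at he he'
      obtain ⟨f, hf, rfl⟩ := he
      obtain ⟨f', hf', rfl⟩ := he'
      have := a4 f hf f' hf'
      simp only [Prod.fst_swap, Prod.snd_swap]
      omega
  · rw [e1, h3]
  · rw [e2, h2]
  · simp only [e1, e2]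
    rw [add_comm, h4]

lemma Re.ext {C : Multiset ℕ} {x y : ℕ} (h : Re C x y) (s : ℕ) :
    Re (Multiset.replicate s 0 + x ::ₘ C) 1 (y + 1) := by
  obtain ⟨p, q, E, h1, h2, h3, h4⟩ := h
  obtain ⟨hn, hc⟩ := h1.insert (P' := p + 1 + s + 1) (Q' := q + 1) (by omega) le_rfl
  refine ⟨p + 1 + s, q, _, hc, ?_, ?_, ?_⟩
  · rw [dT_insert _ _ _ _ hn, dT_zero h1 (by omega)]; simp
  · rw [dB_insert _ _ _ _ hn, h3]; simp
  · rw [← h4, ← h2, Multiset.range_add, Multiset.range_succ]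
    simp only [Multiset.map_add, Multiset.map_cons, Multiset.map_map, dT_insert _ _ _ _ hn,
      dB_insert _ _ _ _ hn]
    have t1 : (Multiset.range p).map (fun i => dT E (i + 1) + if p + 1 + s + 1 = i + 1 then 1 else 0)
        = (Multiset.range p).map (fun i => dT E (i + 1)) := by
      apply Multiset.map_congr rfl
      intro i hi
      rw [Multiset.mem_range] at hi
      rw [if_neg (by omega), add_zero]
    have t2 : (Multiset.range q).map (fun i => dB E (i + 1) + if q + 1 = i + 1 then 1 else 0)
        = (Multiset.range q).map (fun i => dB E (i + 1)) := by
      apply Multiset.map_congr rfl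
      intro i hi
      rw [Multiset.mem_range] at hi
      rw [if_neg (by omega), add_zero]
    have t3 : (Multiset.range s).map ((fun i => dT E (i + 1) + 
        if p + 1 + s + 1 = i + 1 then 1 else 0) ∘ fun i => p + 1 + i) = Multiset.replicate s 0 := by
      rw [Multiset.eq_replicate]
      refine ⟨by simp, ?_⟩
      intro b hb
      rw [Multiset.mem_map] at hb
      obtain ⟨i, hi, rfl⟩ := hb
      rw [Multiset.mem_range] at hi
      simp only [Function.comp]
      rw [if_neg (by omega), dT_zero h1 (by omega)]
    rw [t1, t2, t3, if_neg (by omega), add_zero]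
    simp only [Multiset.cons_add, Multiset.add_cons]
    congr 1
    abel

lemma Re.new {C : Multiset ℕ} {x y : ℕ} (h : Re C x y) (s : ℕ) :
    Re (Multiset.replicate s 0 + x ::ₘ y ::ₘ C) 1 1 := by
  obtain ⟨p, q, E, h1, h2, h3, h4⟩ := h
  obtain ⟨hn, hc⟩ := h1.insert (P' := p + 1 + s + 1) (Q' := q + 1 + 1) (by omega) (by omega)
  refine ⟨p + 1 + s, q + 1, _, hc, ?_, ?_, ?_⟩
  · rw [dT_insert _ _ _ _ hn, dT_zero h1 (by omega)]; simp
  · rw [dB_insert _ _ _ _ hn, dB_zero h1 (by omega)]; simp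
  · rw [← h4, ← h2, ← h3, Multiset.range_add, Multiset.range_succ, Multiset.range_succ]
    simp only [Multiset.map_add, Multiset.map_cons, Multiset.map_map, dT_insert _ _ _ _ hn,
      dB_insert _ _ _ _ hn]
    have t1 : (Multiset.range p).map (fun i => dT E (i + 1) + if p + 1 + s + 1 = i + 1 then 1 else 0)
        = (Multiset.range p).map (fun i => dT E (i + 1)) := by
      apply Multiset.map_congr rfl
      intro i hi
      rw [Multiset.mem_range] at hi
      rw [if_neg (by omega), add_zero]
    have t2 : (Multiset.range q).map (fun i => dB E (i + 1) + if q + 1 + 1 = i + 1 then 1 else 0)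
        = (Multiset.range q).map (fun i => dB E (i + 1)) := by
      apply Multiset.map_congr rfl
      intro i hi
      rw [Multiset.mem_range] at hi
      rw [if_neg (by omega), add_zero]
    have t3 : (Multiset.range s).map ((fun i => dT E (i + 1) + 
        if p + 1 + s + 1 = i + 1 then 1 else 0) ∘ fun i => p + 1 + i) = Multiset.replicate s 0 := by
      rw [Multiset.eq_replicate]
      refine ⟨by simp, ?_⟩
      intro b hb
      rw [Multiset.mem_map] at hb
      obtain ⟨i, hi, rfl⟩ := hb
      rw [Multiset.mem_range] at hi
      simp only [Function.comp]
      rw [if_neg (by omega), dT_zero h1 (by omega)]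
    rw [t1, t2, t3, if_neg (by omega), if_neg (by omega), add_zero, add_zero]
    simp only [Multiset.cons_add, Multiset.add_cons]
    rw [Multiset.cons_swap]
    congr 2
    abel

lemma Good.re {C : Multiset ℕ} {x y : ℕ} (h : Good C x y) : Re C x y := by
  induction h with
  | base =>
    refine ⟨0, 0, {(1, 1)}, ⟨by simp, by simp, by simp, by simp⟩, rfl, rfl, by simp⟩
  | swap _ ih => exact ih.swap
  | ext _ ih => simpa using ih.ext 0
  | new _ ih => simpa using ih.new 0

lemma Good.re' {C : Multiset ℕ} {x y : ℕ} (h : Good C x y) : C = 0 ∨ Re (0 ::ₘ C) x y := by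
  induction h with
  | base => left; rfl
  | swap _ ih => exact ih.imp id Re.swap
  | ext h _ => right; exact h.re.ext 1
  | new h _ => right; exact h.re.new 1

/-- degree as a cardinality -/
noncomputable def dg {V : Type*} (G : SimpleGraph V) (v : V) : ℕ := (G.neighborSet v).ncard

lemma dg_eq {V : Type*} (G : SimpleGraph V) (v : V) [Fintype (G.neighborSet v)] :
    dg G v = G.degree v := by
  unfold dg
  rw [← SimpleGraph.coe_neighborFinset, Set.ncard_coe_finset, SimpleGraph.card_neighborFinset_eq_degree]

lemma degreeMultiset_eq (n : ℕ) [NeZero n] (G : SimpleGraph (ZMod n)) :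
    degreeMultiset n G = Finset.univ.val.map (dg G) := by
  classical
  unfold degreeMultiset
  rw [dif_neg (NeZero.ne n)]
  unfold degMultiset
  have : dg G = fun v => G.degree v := funext fun v => dg_eq G v
  rw [this]

lemma dg_iso {V : Type*} {G G' : SimpleGraph V} (f : G ≃g G') (v : V) : dg G' (f v) = dg G v := by
  unfold dg
  have : G'.neighborSet (f v) = f '' G.neighborSet v := by
    ext w
    simp only [SimpleGraph.mem_neighborSet, Set.mem_image]
    constructor
    · intro h
      refine ⟨f.symm w, ?_, by simp⟩
      rw [← f.map_adj_iff]
      simpa using h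
    · rintro ⟨u, hu, rfl⟩
      exact f.map_adj_iff.2 hu
  rw [this, Set.ncard_image_of_injective _ f.injective]

lemma outer_adj {n : ℕ} {G : SimpleGraph (ZMod n)} {S : Set (Sym2 (ZMod n))}
    (hS : NonCrossingChords n S) (hES : G.edgeSet = {e | IsCycleEdge n e} ∪ S) (u v : ZMod n) :
    G.Adj u v ↔ IsCycleEdge n s(u, v) ∨ (chordGraph n S).Adj u v := by
  rw [← SimpleGraph.mem_edgeSet, hES, chordGraph_adj hS]
  rfl

lemma outer_dg {n : ℕ} [NeZero n] (hn : 3 ≤ n) {G : SimpleGraph (ZMod n)} {S : Set (Sym2 (ZMod n))}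
    (hS : NonCrossingChords n S) (hES : G.edgeSet = {e | IsCycleEdge n e} ∪ S) (v : ZMod n) :
    dg G v = 2 + dg (chordGraph n S) v := by
  unfold dg
  have h1 : G.neighborSet v = {v + 1, v - 1} ∪ (chordGraph n S).neighborSet v := by
    ext w
    simp only [SimpleGraph.mem_neighborSet, outer_adj hS hES, Set.mem_union, Set.mem_insert_iff,
      Set.mem_singleton_iff]
    apply or_congr_left
    constructor
    · rintro ⟨i, hi⟩
      rcases Sym2.eq_iff.1 hi with ⟨rfl, rfl⟩ | ⟨rfl, rfl⟩ <;> simp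
    · rintro (rfl | rfl)
      · exact ⟨v, rfl⟩
      · exact ⟨v - 1, by rw [sub_add_cancel, Sym2.eq_swap]⟩
  rw [h1, Set.ncard_union_eq _ (Set.toFinite _) (Set.toFinite _), Set.ncard_pair]
  · intro h
    have a1 := val_succ n (by omega) v
    have a2 := val_succ n (by omega) (v - 1)
    rw [sub_add_cancel] at a2
    rw [h] at a1
    omega
  · rw [Set.disjoint_left]
    intro w hw hw'
    rw [SimpleGraph.mem_neighborSet, chordGraph_adj hS] at hw'
    apply (hS.1 _ hw').2
    rcases hw with rfl | rfl
    · exact ⟨v, rfl⟩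
    · exact ⟨v - 1, by rw [sub_add_cancel, Sym2.eq_swap]⟩

/-- the chords of a chain -/
def chS (n : ℕ) (E : Finset (ℕ × ℕ)) : Set (Sym2 (ZMod n)) :=
  {e | ∃ p ∈ E, e = s((p.1 : ZMod n), ((n - p.2 : ℕ) : ZMod n))}

lemma chS_val {n P Q : ℕ} [NeZero n] {E : Finset (ℕ × ℕ)} (h : Ch E P Q) (hn : P + Q + 2 ≤ n)
    (p : ℕ × ℕ) (hp : p ∈ E) : ((p.1 : ℕ) : ZMod n).val = p.1 ∧ ((n - p.2 : ℕ) : ZMod n).val = n - p.2 := by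
  have := h.2.2.1 p hp
  exact ⟨ZMod.val_natCast_of_lt (by omega), ZMod.val_natCast_of_lt (by omega)⟩

lemma chS_nc {n P Q : ℕ} [NeZero n] {E : Finset (ℕ × ℕ)} (h : Ch E P Q) (hn : P + Q + 2 ≤ n) :
    NonCrossingChords n (chS n E) := by
  constructor
  · rintro e ⟨p, hp, rfl⟩
    have h1 := chS_val h hn p hp
    have h2 := h.2.2.1 p hp
    refine ⟨?_, ?_⟩
    · rw [Sym2.mk_isDiag_iff]
      intro h3
      have := congrArg ZMod.val h3
      omega
    · rw [isCycleEdge_iff n (by omega)]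
      omega
  · rintro e ⟨p, hp, rfl⟩ f ⟨q, hq, rfl⟩ hef hc
    have h1 := chS_val h hn p hp
    have h2 := h.2.2.1 p hp
    have h3 := chS_val h hn q hq
    have h4 := h.2.2.1 q hq
    have h5 := h.2.2.2 p hp q hq
    have h6 := hc _ _ _ _ rfl rfl
    have h7 := hc _ _ _ _ Sym2.eq_swap rfl
    unfold Xor' Xor at h6 h7
    simp only [between_iff] at h6 h7
    omega

lemma chS_dg {n P Q : ℕ} [NeZero n] {E : Finset (ℕ × ℕ)} (h : Ch E P Q) (hn : P + Q + 2 ≤ n)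
    (v : ZMod n) : dg (chordGraph n (chS n E)) v = dT E v.val + dB E (n - v.val) := by
  classical
  have hS := chS_nc h hn
  have hv := ZMod.val_lt v
  unfold dg
  have h1 : (chordGraph n (chS n E)).neighborSet v =
      ↑((E.filter (fun p => p.1 = v.val)).image (fun p => ((n - p.2 : ℕ) : ZMod n)) ∪
      (E.filter (fun p => p.2 = n - v.val)).image (fun p => ((p.1 : ℕ) : ZMod n))) := by
    ext w
    simp only [SimpleGraph.mem_neighborSet, chordGraph_adj hS, Finset.coe_union, Finset.coe_image,
      Set.mem_union, Set.mem_image, Finset.coe_filter, Set.mem_ofPred_eq]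
    constructor
    · rintro ⟨p, hp, hpe⟩
      have h1 := chS_val h hn p hp
      have h2 := h.2.2.1 p hp
      rcases Sym2.eq_iff.1 hpe with ⟨rfl, rfl⟩ | ⟨rfl, rfl⟩
      · left; exact ⟨p, ⟨hp, h1.1.symm⟩, rfl⟩
      · right; exact ⟨p, ⟨hp, by omega⟩, rfl⟩
    · rintro (⟨p, ⟨hp, hpv⟩, rfl⟩ | ⟨p, ⟨hp, hpv⟩, rfl⟩)
      · refine ⟨p, hp, ?_⟩
        rw [hpv, ZMod.natCast_zmod_val]
      · refine ⟨p, hp, ?_⟩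
        have : n - p.2 = v.val := by omega
        rw [this, ZMod.natCast_zmod_val, Sym2.eq_swap]
  rw [h1, Set.ncard_coe_finset, Finset.card_union_of_disjoint, Finset.card_image_of_injOn,
    Finset.card_image_of_injOn]
  · rfl
  · intro p hp q hq hpq
    simp only [Finset.coe_filter, Set.mem_ofPred_eq] at hp hq
    have h1 := chS_val h hn p hp.1
    have h2 := chS_val h hn q hq.1
    simp only at hpq
    rw [hpq] at h1
    exact Prod.ext (by omega) (by omega)
  · intro p hp q hq hpq
    simp only [Finset.coe_filter, Set.mem_ofPred_eq] at hp hq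
    have h1 := chS_val h hn p hp.1
    have h2 := chS_val h hn q hq.1
    have h3 := h.2.2.1 p hp.1
    have h4 := h.2.2.1 q hq.1
    simp only at hpq
    rw [hpq] at h1
    exact Prod.ext (by omega) (by omega)
  · rw [Finset.disjoint_left]
    intro w hw hw'
    simp only [Finset.mem_image, Finset.mem_filter] at hw hw'
    obtain ⟨p, hp, -⟩ := hw
    obtain ⟨q, hq, -⟩ := hw'
    have h3 := h.2.2.1 p hp.1
    have h4 := h.2.2.1 q hq.1
    omega

lemma map_univ_zmod (n : ℕ) [NeZero n] (f : ℕ → ℕ) :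
    (Finset.univ : Finset (ZMod n)).val.map (fun v => f v.val) = (Multiset.range n).map f := by
  classical
  have h : (Finset.univ : Finset (ZMod n)).image ZMod.val = Finset.range n := by
    ext k
    simp only [Finset.mem_image, Finset.mem_univ, true_and, Finset.mem_range]
    exact ⟨fun ⟨v, hv⟩ => hv ▸ ZMod.val_lt v, fun hk => exists_val n hk⟩
  have h2 := Finset.image_val_of_injOn (s := (Finset.univ : Finset (ZMod n))) (f := ZMod.val)
    (ZMod.val_injective n).injOn
  rw [h, Finset.range_val] at h2
  rw [h2, Multiset.map_map]
  rfl

lemma map_reflect (Q : ℕ) (f : ℕ → ℕ) :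
    (Multiset.range Q).map (fun j => f (Q - j)) = (Multiset.range Q).map (fun j => f (j + 1)) := by
  have key : ∀ g : ℕ → ℕ, (Multiset.range Q).map g = ∑ i ∈ Finset.range Q, {g i} := by
    intro g
    rw [Finset.sum_eq_multiset_sum, Finset.range_val]
    have h := Multiset.sum_map_singleton ((Multiset.range Q).map g)
    rw [Multiset.map_map] at h
    exact h.symm
  rw [key, key, ← Finset.sum_range_reflect]
  apply Finset.sum_congr rfl
  intro i hi
  rw [Finset.mem_range] at hi
  congr 2
  omega

lemma chain_multiset {P Q r : ℕ} {E : Finset (ℕ × ℕ)} (h : Ch E P Q) (hr : 1 ≤ r) :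
    (Multiset.range (P + 1 + r + Q)).map (fun k => 2 + (dT E k + dB E (P + 1 + r + Q - k))) =
    ((Multiset.range P).map (fun i => dT E (i + 1)) +
      (Multiset.range Q).map (fun i => dB E (i + 1))).map (2 + ·) + Multiset.replicate (r + 1) 2 := by
  rw [Multiset.range_add, Multiset.range_add, add_comm P 1, Multiset.range_add 1 P]
  simp only [Multiset.map_add, Multiset.map_map, Function.comp_def]
  have e1 : (Multiset.range 1).map (fun k => 2 + (dT E k + dB E (1 + P + r + Q - k))) =
      Multiset.replicate 1 2 := by
    simp [Multiset.range_succ, dT_zero h (Or.inl rfl), dB_zero h (k := 1 + P + r + Q) (by omega)]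
  have e2 : (Multiset.range P).map (fun k => 2 + (dT E (1 + k) + dB E (1 + P + r + Q - (1 + k)))) =
      (Multiset.range P).map (fun k => 2 + dT E (k + 1)) := by
    apply Multiset.map_congr rfl
    intro k hk
    rw [Multiset.mem_range] at hk
    rw [dB_zero h (by omega), add_comm 1 k, add_zero]
  have e3 : (Multiset.range r).map (fun k => 2 + (dT E (1 + P + k) + dB E (1 + P + r + Q - (1 + P + k)))) =
      Multiset.replicate r 2 := by
    rw [Multiset.eq_replicate]
    refine ⟨by simp, ?_⟩
    intro b hb
    rw [Multiset.mem_map] at hb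
    obtain ⟨k, hk, rfl⟩ := hb
    rw [Multiset.mem_range] at hk
    rw [dB_zero h (by omega), dT_zero h (by omega)]
  have e4 : (Multiset.range Q).map (fun k => 2 + (dT E (1 + P + r + k) + dB E (1 + P + r + Q - (1 + P + r + k)))) =
      (Multiset.range Q).map (fun k => 2 + dB E (k + 1)) := by
    rw [← map_reflect Q (fun j => 2 + dB E j)]
    apply Multiset.map_congr rfl
    intro k hk
    rw [Multiset.mem_range] at hk
    rw [dT_zero h (by omega), zero_add]
    congr 2
    omega
  rw [e1, e2, e3, e4, Multiset.replicate_add]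
  abel

lemma realise {C : Multiset ℕ} {x y n r : ℕ} (h : Re C x y) (hr : 1 ≤ r) (hn : n = C.card + 3 + r) :
    ∃ G : SimpleGraph (ZMod n), IsOuterplane n G ∧
      degreeMultiset n G = (x ::ₘ y ::ₘ C).map (2 + ·) + Multiset.replicate (r + 1) 2 ∧
      (2 ≤ r → ∃ u v, G.Adj u v ∧ dg G u = 2 ∧ dg G v = 2) ∧
      (r = 1 → (degreeMultiset n G).count 2 = 3 → ∀ u v, G.Adj u v → dg G u = 2 → dg G v = 2 → False) := by
  classical
  have : NeZero n := ⟨by omega⟩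
  obtain ⟨p, q, E, hc, hx, hy, hC⟩ := h
  have hcard := congrArg Multiset.card hC
  simp only [Multiset.card_add, Multiset.card_map, Multiset.card_range] at hcard
  have hnn : n = (p + 1) + 1 + r + (q + 1) := by omega
  have hle : (p + 1) + (q + 1) + 2 ≤ n := by omega
  have hS := chS_nc hc hle
  have hES : (SimpleGraph.fromEdgeSet ({e | IsCycleEdge n e} ∪ chS n E)).edgeSet =
      {e | IsCycleEdge n e} ∪ chS n E := by
    rw [SimpleGraph.edgeSet_fromEdgeSet]
    ext e
    refine ⟨fun h => h.1, fun h => ⟨h, fun hd => ?_⟩⟩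
    have hd' : e.IsDiag := hd
    rcases h with ⟨i, rfl⟩ | h
    · rw [Sym2.mk_isDiag_iff] at hd'
      have a1 := val_succ n (by omega) i
      rw [← hd'] at a1
      have := ZMod.val_lt i
      omega
    · exact (hS.1 _ h).1 hd'
  generalize SimpleGraph.fromEdgeSet ({e | IsCycleEdge n e} ∪ chS n E) = G at hES
  have hdg : ∀ v, dg G v = 2 + (dT E v.val + dB E (n - v.val)) := fun v => by
    rw [outer_dg (by omega) hS hES, chS_dg hc hle]
  have hM : degreeMultiset n G = (Multiset.range n).map (fun k => 2 + (dT E k + dB E (n - k))) := by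
    rw [degreeMultiset_eq, ← map_univ_zmod]
    congr 1
    funext v
    exact hdg v
  refine ⟨G, ⟨_, hS, hES⟩, ?_, ?_, ?_⟩
  · rw [hM]
    conv_lhs => rw [hnn]
    rw [chain_multiset hc hr, ← hC, ← hx, ← hy, Multiset.range_succ, Multiset.range_succ]
    congr 2
    simp only [Multiset.map_cons, Multiset.cons_add, Multiset.add_cons]
    rw [Multiset.cons_swap]
  · intro hr2
    obtain ⟨u, hu⟩ := exists_val n (k := p + 2) (by omega)
    obtain ⟨v, hv⟩ := exists_val n (k := p + 3) (by omega)
    refine ⟨u, v, ?_, ?_, ?_⟩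
    · rw [outer_adj hS hES, isCycleEdge_iff n (by omega)]
      omega
    · rw [hdg, dT_zero hc (by omega), dB_zero hc (by omega)]
    · rw [hdg, dT_zero hc (by omega), dB_zero hc (by omega)]
  · intro hr1 hcount u v huv hu hv
    have hlu := ZMod.val_lt u
    have hlv := ZMod.val_lt v
    rw [hdg] at hu hv
    have p1 := dT_pos hc.1
    have p2 := dT_pos hc.2.1
    have p3 := dB_pos hc.1
    have p4 := dB_pos hc.2.1
    have key : ∀ w : ZMod n, 2 + (dT E w.val + dB E (n - w.val)) = 2 →
        w.val ≠ 1 ∧ w.val ≠ p + 1 ∧ w.val ≠ p + 3 ∧ w.val + 1 ≠ n := by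
      intro w hw
      have h1 : dT E w.val = 0 := by omega
      have h2 : dB E (n - w.val) = 0 := by omega
      refine ⟨fun h => ?_, fun h => ?_, fun h => ?_, fun h => ?_⟩
      · rw [h] at h1; omega
      · rw [h] at h1; omega
      · have : n - w.val = q + 1 := by omega
        rw [this] at h2; omega
      · have : n - w.val = 1 := by omega
        rw [this] at h2; omega
    have ku := key u hu
    have kv := key v hv
    have hcyc : IsCycleEdge n s(u, v) := by
      rcases (outer_adj hS hES u v).1 huv with h | h
      · exact h
      · exfalso
        have := chS_dg hc hle u
        unfold dg at this
        have h2 : ((chordGraph n (chS n E)).neighborSet u).ncard = 0 := by omega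
        rw [Set.ncard_eq_zero] at h2
        have h3 : v ∈ (chordGraph n (chS n E)).neighborSet u := h
        rw [h2] at h3
        exact h3
    rw [isCycleEdge_iff n (by omega)] at hcyc
    rw [hM, Multiset.count_map] at hcount
    have hsub : ({0, p + 2, u.val, v.val} : Finset ℕ) ⊆
        (Finset.range n).filter (fun k => 2 = 2 + (dT E k + dB E (n - k))) := by
      intro k hk
      simp only [Finset.mem_insert, Finset.mem_singleton] at hk
      rw [Finset.mem_filter, Finset.mem_range]
      rcases hk with rfl | rfl | rfl | rfl
      · rw [dT_zero hc (by omega), dB_zero hc (by omega)]; omega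
      · rw [dT_zero hc (by omega), dB_zero hc (by omega)]; omega
      · exact ⟨hlu, hu.symm⟩
      · exact ⟨hlv, hv.symm⟩
    have hle4 := Finset.card_le_card hsub
    have h4 : ({0, p + 2, u.val, v.val} : Finset ℕ).card = 4 := by
      rw [Finset.card_insert_of_notMem, Finset.card_insert_of_notMem, Finset.card_insert_of_notMem,
        Finset.card_singleton]
      all_goals simp only [Finset.mem_insert, Finset.mem_singleton]; omega
    have h5 : ((Finset.range n).filter (fun k => 2 = 2 + (dT E k + dB E (n - k)))).card = 3 := hcount
    omega

lemma edges_many (n : ℕ) (hn : 6 ≤ n) (M : Multiset ℕ)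
    (hcard : Multiset.card M = n)
    (hge : ∀ m ∈ M, 2 ≤ m)
    (hthree : M.count 2 = 3)
    (huni : OuterplaneUnigraphic n M) (m : ℕ) (hsum : M.sum = 2 * n + 2 * m) : n ≤ m + 3 := by
  by_contra hlt
  set C := (M.filter (fun k => ¬ (2 = k))).map (fun k => k - 2) with hCdef
  have hM0 := Multiset.filter_add_not (fun k => 2 = k) M
  rw [Multiset.filter_eq, hthree] at hM0
  have hM : M = C.map (2 + ·) + Multiset.replicate 3 2 := by
    rw [hCdef, Multiset.map_map]
    have : Multiset.map ((fun x => 2 + x) ∘ fun k => k - 2) (M.filter (fun k => ¬ (2 = k))) =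
        M.filter (fun k => ¬ (2 = k)) := by
      conv_rhs => rw [← Multiset.map_id (M.filter (fun k => ¬ (2 = k)))]
      apply Multiset.map_congr rfl
      intro k hk
      have := hge k (Multiset.mem_of_mem_filter hk)
      simp only [Function.comp, id]
      omega
    rw [this, add_comm]
    exact hM0.symm
  have h1 : ∀ c ∈ C, 1 ≤ c := by
    intro c hc
    rw [hCdef, Multiset.mem_map] at hc
    obtain ⟨k, hk, rfl⟩ := hc
    rw [Multiset.mem_filter] at hk
    have := hge k hk.1
    omega
  clear_value C
  have hCc : C.card + 3 = n := by
    rw [← hcard, hM]; simp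
  have hCs : C.sum = 2 * m := by
    have hs2 : ∀ D : Multiset ℕ, (D.map (2 + ·)).sum = 2 * D.card + D.sum := by
      intro D
      induction D using Multiset.induction_on with
      | empty => simp
      | cons a D ih =>
        rw [Multiset.map_cons, Multiset.sum_cons, ih, Multiset.card_cons, Multiset.sum_cons]
        ring
    rw [hM, Multiset.sum_add, hs2, Multiset.sum_replicate, smul_eq_mul] at hsum
    omega
  obtain ⟨C0, x, y, hg, hC⟩ := good_of C h1 m hCs (by omega)
  have hc0 : C0.card + 2 = C.card := by rw [← hC]; simp
  obtain ⟨G1, ho1, hd1, hp1, -⟩ := realise (n := n) (r := 2) hg.re (by omega) (by omega)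
  rcases hg.re' with h0 | hre
  · rw [h0] at hc0
    simp at hc0
    omega
  obtain ⟨G2, ho2, hd2, -, hp2⟩ := realise (n := n) (r := 1) hre (by omega)
    (by rw [Multiset.card_cons]; omega)
  have e1 : degreeMultiset n G1 = M := by
    rw [hd1, hC, hM]
  have e2 : degreeMultiset n G2 = M := by
    rw [hd2, hM, ← hC]
    simp only [Multiset.map_cons, Multiset.replicate_succ, Multiset.cons_add, Multiset.add_cons,
      Multiset.replicate_zero, Multiset.map_zero, add_zero]
    simp only [← Multiset.singleton_add]
    abel
  obtain ⟨f⟩ := huni.2 G1 G2 ho1 ho2 e1 e2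
  obtain ⟨u, v, huv, hu, hv⟩ := hp1 le_rfl
  exact hp2 rfl (by rw [e2, hthree]) (f u) (f v) (f.map_adj_iff.2 huv) (by rw [dg_iso, hu])
    (by rw [dg_iso, hv])
/-- The paper's Lemma 5: if `M` (entries at least `2`, exactly three entries
equal to `2`, `n ≥ 6`) is outerplane-unigraphic, then for every outerplane
realisation the chord graph has exactly one cycle, which is a triangle, and
deleting the chord-free vertices leaves a connected graph. -/
theorem unique_triangle_lemma (n : ℕ) (hn : 6 ≤ n) (M : Multiset ℕ)
    (hcard : Multiset.card M = n)
    (hge : ∀ m ∈ M, 2 ≤ m)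
    (hthree : M.count 2 = 3)
    (huni : OuterplaneUnigraphic n M)
    (G : SimpleGraph (ZMod n)) (hG : IsOuterplane n G)
    (hdeg : degreeMultiset n G = M)
    (S : Set (Sym2 (ZMod n))) (hS : NonCrossingChords n S)
    (hES : G.edgeSet = {e | IsCycleEdge n e} ∪ S) :
    (∃ (v : ZMod n) (c : (chordGraph n S).Walk v v), c.IsCycle ∧ c.length = 3 ∧
        ∀ (w : ZMod n) (d : (chordGraph n S).Walk w w), d.IsCycle →
          ∀ x : ZMod n, x ∈ d.support ↔ x ∈ c.support) ∧
      ((chordGraph n S).induce {u : ZMod n | ¬ ChordFree n S u}).Connected := by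
  classical
  have : NeZero n := ⟨by omega⟩
  have hdg : ∀ v, dg G v = 2 + dg (chordGraph n S) v := outer_dg (by omega) hS hES
  have hdeg' := hdeg
  rw [degreeMultiset_eq] at hdeg'
  have hiso : ∀ x : ZMod n, dg (chordGraph n S) x = 0 ↔ ∀ y, ¬ (chordGraph n S).Adj x y := by
    intro x
    unfold dg
    rw [Set.ncard_eq_zero, Set.eq_empty_iff_forall_notMem]
    rfl
  have hF : ∀ x : ZMod n, x ∈ Finset.univ.filter (fun v => 2 = dg G v) ↔
      ∀ y, ¬ (chordGraph n S).Adj x y := by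
    intro x
    rw [← hiso, Finset.mem_filter, hdg]
    simp
  have hF3 : (Finset.univ.filter (fun v => 2 = dg G v)).card = 3 := by
    rw [← hdeg', Multiset.count_map] at hthree
    exact hthree
  have hcf : ∀ x : ZMod n, ChordFree n S x ↔ ∀ y, ¬ (chordGraph n S).Adj x y := by
    intro x
    constructor
    · intro h y hxy
      rw [chordGraph_adj hS] at hxy
      exact h _ hxy (Sym2.mem_mk_left x y)
    · intro h e he hx
      obtain ⟨y, rfl⟩ := Sym2.mem_iff_exists.1 hx
      exact h y ((chordGraph_adj hS x y).2 he)
  have hsum : M.sum = 2 * n + 2 * (chordGraph n S).edgeSet.ncard := by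
    have h1 := SimpleGraph.sum_degrees_eq_twice_card_edges (chordGraph n S)
    have h2 : (chordGraph n S).edgeSet.ncard = (chordGraph n S).edgeFinset.card := by
      rw [← SimpleGraph.coe_edgeFinset, Set.ncard_coe_finset]
    rw [h2, ← h1, ← hdeg']
    change ∑ v, dg G v = _
    simp only [hdg, Finset.sum_add_distrib, dg_eq]
    simp [ZMod.card, mul_comm]
  have hm := edges_many n hn M hcard hge hthree huni _ hsum
  refine part_two n hn (chordGraph n S) (NC_of n (by omega) hS) _ hF hF3 hm
    {u : ZMod n | ¬ ChordFree n S u} ?_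
  intro x
  rw [hF, ← hcf]
  rfl
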